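/- arXiv:cs/0512013 — 10 statements merged into one kernel-verified Lean document; each statement's English description precedes it below -/
import Mathlib

section
/- Fix positive reals h₁, h₂, σ², λ₁, λ₂. Define P₁ = (λ₁ − σ²/h₁)⁺ if λ₁h₁ ≥ λ₂h₂ and P₁ = 0 otherwise, and P₂ = (λ₂ − σ²/h₂)⁺ if λ₂h₂ > λ₁h₁ and P₂ = 0 otherwise. Then P₁ = (λ₁ − σ²/h₁ − P₂h₂/h₁)⁺ and P₂ = (λ₂ − σ²/h₂ − P₁h₁/h₂)⁺; that is, at every channel state the time-sharing power allocations are mutual water-filling best responses. -/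
/-!
At most one user is active. The user with the larger product of water level and gain sees no interference, so its power is a best response
by definition. The other user is silent, and its best
response vanishes by `best_response_to_stronger_eq_zero`.
-/

/-- If one user (gain `a`, level `l`) has the larger product of water level and gain, its
single-user water-filling power `P` satisfies `P * a ≥ l * a - s ≥ m * b - s`, so the noise plus
interference at the other user (gain `b`, level `m`) already reaches that user's water level. -/
lemma best_response_to_stronger_eq_zero {a b s l m : ℝ} (ha : 0 < a) (hb : 0 < b)
    (h : m * b ≤ l * a) :
    max (m - s / b - max (l - s / a) 0 * a / b) 0 = 0 := by
  apply max_eq_right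
  have hP : (l - s / a) * a ≤ max (l - s / a) 0 * a :=
    mul_le_mul_of_nonneg_right (le_max_left _ _) ha.le
  have hl : (l - s / a) * a = l * a - s := by field_simp
  have hm : m - s / b - max (l - s / a) 0 * a / b
      = (m * b - s - max (l - s / a) 0 * a) / b := by field_simp
  rw [hm]
  exact div_nonpos_of_nonpos_of_nonneg (by linarith) hb.le

/-- At every channel state, the time-sharing power allocations (where only the user
with the larger `lamᵢ * hᵢ` transmits, water-filling over the background noise)
are mutual water-filling best responses. -/
theorem stmt_0 (h₁ h₂ σ2 lam₁ lam₂ P₁ P₂ : ℝ)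
    (hh₁ : 0 < h₁) (hh₂ : 0 < h₂) (hσ : 0 < σ2) (hlam₁ : 0 < lam₁) (hlam₂ : 0 < lam₂)
    (hP₁ : P₁ = if lam₂ * h₂ ≤ lam₁ * h₁ then max (lam₁ - σ2 / h₁) 0 else 0)
    (hP₂ : P₂ = if lam₁ * h₁ < lam₂ * h₂ then max (lam₂ - σ2 / h₂) 0 else 0) :
    P₁ = max (lam₁ - σ2 / h₁ - P₂ * h₂ / h₁) 0 ∧
    P₂ = max (lam₂ - σ2 / h₂ - P₁ * h₁ / h₂) 0 := by
  rcases le_or_gt (lam₂ * h₂) (lam₁ * h₁) with h | h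
  · rw [if_pos h] at hP₁
    rw [if_neg h.not_gt] at hP₂
    subst hP₁ hP₂
    exact ⟨by simp, (best_response_to_stronger_eq_zero hh₁ hh₂ h).symm⟩
  · rw [if_neg h.not_ge] at hP₁
    rw [if_pos h] at hP₂
    subst hP₁ hP₂
    exact ⟨(best_response_to_stronger_eq_zero hh₂ hh₁ h.le).symm, by simp⟩
end

section
/- Let N ≥ 1 and let h, λ : Fin N → ℝ be strictly positive, σ² > 0, and let i* be an index such that λⱼhⱼ ≤ λᵢ*hᵢ* for all j. Define P : Fin N → ℝ by Pᵢ* = (λᵢ* − σ²/hᵢ*)⁺ and Pⱼ = 0 for j ≠ i*. Then for every i one has Pᵢ = (λᵢ − (σ² + Σ_{j≠i} hⱼPⱼ)/hᵢ)⁺; that is, the opportunistic allocation in which only the user with the largest λᵢhᵢ transmits is a simultaneous water-filling fixed point for all N users. -/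
/-!
User `istar` sees no interference, so its equation is the definition of `P istar`.
Any other user `i` sees noise plus interference `σ2 + h istar * P istar`, which is at least
`lam istar * h istar`, hence at least `lam i * h i` by maximality of `istar`; its
water-filling response is therefore zero.
-/

open Finset in
/-- The opportunistic allocation, in which only the user with the largest
`lam i * h i` transmits (water-filling over the background noise), is a
simultaneous water-filling fixed point for all `N` users. -/
theorem stmt_1 (N : ℕ) (hN : 1 ≤ N) (h lam : Fin N → ℝ) (σ2 : ℝ)
    (hh : ∀ i, 0 < h i) (hlam : ∀ i, 0 < lam i) (hσ : 0 < σ2)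
    (istar : Fin N) (hstar : ∀ j, lam j * h j ≤ lam istar * h istar)
    (P : Fin N → ℝ)
    (hP : P = fun i => if i = istar then max (lam istar - σ2 / h istar) 0 else 0) :
    ∀ i, P i = max (lam i - (σ2 + ∑ j ∈ univ.erase i, h j * P j) / h i) 0 := by
  subst hP
  intro i
  by_cases hi : i = istar
  · subst hi
    have hsum : ∑ j ∈ univ.erase i,
        h j * (if j = i then max (lam i - σ2 / h i) 0 else 0) = 0 :=
      sum_eq_zero fun j hj => by simp [ne_of_mem_erase hj]
    simp only [hsum, if_true, add_zero]
  · have hsum : ∑ j ∈ univ.erase i,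
        h j * (if j = istar then max (lam istar - σ2 / h istar) 0 else 0)
          = h istar * max (lam istar - σ2 / h istar) 0 := by
      simp [Ne.symm hi]
    simp only [hsum, if_neg hi]
    -- Noise plus the interference of `istar` is at least `lam istar * h istar ≥ lam i * h i`,
    -- so after division by `h i` it reaches the water level `lam i`.
    have hinterf : lam istar * h istar - σ2 ≤ h istar * max (lam istar - σ2 / h istar) 0 :=
      calc lam istar * h istar - σ2 = h istar * (lam istar - σ2 / h istar) := by
            have := (hh istar).ne'
            field_simp
        _ ≤ _ := mul_le_mul_of_nonneg_left (le_max_left _ _) (hh istar).le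
    symm
    apply max_eq_right
    rw [sub_nonpos, le_div_iff₀ (hh i)]
    linarith [hstar i]
end

section
/- Let N ≥ 1, let h : Fin N → ℝ be strictly positive, let λ, P : Fin N → ℝ, and let σ² > 0. Suppose that for every index i with Pᵢ > 0 the water-filling equation Pᵢ + (σ² + Σ_{j≠i} hⱼPⱼ)/hᵢ = λᵢ holds, where the sum ranges over all j ≠ i. Then for any two indices i, j with Pᵢ > 0 and Pⱼ > 0 one has λᵢhᵢ = λⱼhⱼ. -/
open Finset in
/-- At a Nash equilibrium of the water-filling game, simultaneous transmission by
two users forces the degenerate condition `lam i * h i = lam j * h j`. -/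
theorem stmt_2 (N : ℕ) (hN : 1 ≤ N) (h : Fin N → ℝ) (lam P : Fin N → ℝ) (σ2 : ℝ)
    (hh : ∀ i, 0 < h i) (hσ : 0 < σ2)
    (hwf : ∀ i, 0 < P i →
      P i + (σ2 + ∑ j ∈ univ.erase i, h j * P j) / h i = lam i) :
    ∀ i j, 0 < P i → 0 < P j → lam i * h i = lam j * h j := by
  -- Clearing the denominator, `lam i * h i` is the total received power plus noise,
  -- which does not depend on `i`.
  have key : ∀ i, 0 < P i → lam i * h i = σ2 + ∑ k, h k * P k := by
    intro i hi
    have hne := (hh i).ne'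
    rw [← hwf i hi, ← Finset.add_sum_erase univ (fun k => h k * P k) (mem_univ i), add_mul,
      div_mul_cancel₀ _ hne]
    ring
  intro i j hi hj
  rw [key i hi, key j hj]
end

section
/- Let (Ω, μ) be a measure space, let g : Ω → ℝ be measurable with g > 0 μ-almost everywhere, and let λ > 0. Define the water-filling policy P*(ω) = (λ − 1/g(ω))⁺, and assume P* and ω ↦ log(1 + P*(ω)g(ω)) are μ-integrable; set P̄ = ∫ P* dμ. Then for every measurable P : Ω → ℝ with P ≥ 0 μ-a.e., ∫ P dμ ≤ P̄, and ω ↦ log(1 + P(ω)g(ω)) μ-integrable, one has ∫ log(1 + P g) dμ ≤ ∫ log(1 + P* g) dμ. -/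
open MeasureTheory

/-!
The proof is Lagrangian duality with multiplier `1 / lam`: in each state the water-filling power
maximizes `p ↦ log (1 + p * g) - p / lam` over `p ≥ 0` (`log_rate_le`). Integrating this pointwise
bound, the term `(∫ P - ∫ Pstar) / lam` is nonpositive by the power constraint.
-/

/-- Optimality of the water-filling power in a single state, from the tangent-line bound
`log x - log y ≤ x / y - 1`. -/
lemma log_rate_le {g lam p : ℝ} (hg : 0 < g) (hlam : 0 < lam) (hp : 0 ≤ p) :
    Real.log (1 + p * g) ≤
      Real.log (1 + max (lam - 1 / g) 0 * g) + (p - max (lam - 1 / g) 0) / lam := by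
  have hx : 0 < 1 + p * g := by positivity
  rcases le_total (lam - 1 / g) 0 with h | h
  · rw [max_eq_right h]
    have h1 := Real.log_le_sub_one_of_pos hx
    have hgl : g ≤ 1 / lam := by
      rw [le_div_iff₀ hlam]
      have h2 : lam ≤ 1 / g := by linarith
      rw [le_div_iff₀ hg] at h2
      linarith
    have h3 : p * g ≤ p * (1 / lam) := mul_le_mul_of_nonneg_left hgl hp
    simp only [zero_mul, add_zero, Real.log_one, zero_add, sub_zero]
    rw [div_eq_mul_one_div]
    linarith
  · rw [max_eq_left h]
    have hy : 1 + (lam - 1 / g) * g = lam * g := by field_simp; ring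
    have hy0 : 0 < lam * g := by positivity
    rw [hy]
    have h1 := Real.log_le_sub_one_of_pos (div_pos hx hy0)
    rw [Real.log_div hx.ne' hy0.ne'] at h1
    have h2 : (1 + p * g) / (lam * g) - 1 = (p - (lam - 1 / g)) / lam := by
      field_simp
      ring
    linarith

/-- Water-filling maximizes the average achievable rate subject to an average power
constraint. -/
theorem stmt_5 {Ω : Type*} [MeasurableSpace Ω] (μ : Measure Ω)
    (g : Ω → ℝ) (hg : Measurable g) (hgpos : ∀ᵐ ω ∂μ, 0 < g ω)
    (lam : ℝ) (hlam : 0 < lam)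
    (Pstar : Ω → ℝ) (hPstar : Pstar = fun ω => max (lam - 1 / g ω) 0)
    (hPstarInt : Integrable Pstar μ)
    (hRstarInt : Integrable (fun ω => Real.log (1 + Pstar ω * g ω)) μ)
    (Pbar : ℝ) (hPbar : Pbar = ∫ ω, Pstar ω ∂μ) :
    ∀ P : Ω → ℝ, Measurable P → (∀ᵐ ω ∂μ, 0 ≤ P ω) →
      Integrable P μ → (∫ ω, P ω ∂μ) ≤ Pbar →
      Integrable (fun ω => Real.log (1 + P ω * g ω)) μ →
      (∫ ω, Real.log (1 + P ω * g ω) ∂μ) ≤ ∫ ω, Real.log (1 + Pstar ω * g ω) ∂μ := by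
  intro P _ hP hPInt hle hRInt
  subst hPbar
  have hdiff : Integrable (fun ω => (P ω - Pstar ω) / lam) μ := (hPInt.sub hPstarInt).div_const lam
  have hmono : (∫ ω, Real.log (1 + P ω * g ω) ∂μ) ≤
      ∫ ω, (Real.log (1 + Pstar ω * g ω) + (P ω - Pstar ω) / lam) ∂μ := by
    refine integral_mono_ae hRInt (hRstarInt.add hdiff) ?_
    filter_upwards [hgpos, hP] with ω h1 h2
    simpa only [hPstar] using log_rate_le h1 hlam h2
  rw [integral_add hRstarInt hdiff, integral_div, integral_sub hPInt hPstarInt] at hmono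
  have hneg : ((∫ ω, P ω ∂μ) - ∫ ω, Pstar ω ∂μ) / lam ≤ 0 :=
    div_nonpos_of_nonpos_of_nonneg (by linarith) hlam.le
  linarith
end

section
/- Let μ be a probability measure on ℝ² (coordinates (h₁,h₂)) that is absolutely continuous with respect to Lebesgue measure and satisfies h₁ > 0 and h₂ > 0 μ-almost everywhere. Fix σ² > 0 and λ₁, λ₂ > 0, and let P₁, P₂ : ℝ² → ℝ be measurable functions such that μ-almost everywhere P₁ = (λ₁ − σ²/h₁ − P₂h₂/h₁)⁺ and P₂ = (λ₂ − σ²/h₂ − P₁h₁/h₂)⁺. Then μ({ (h₁,h₂) : P₁(h₁,h₂) > 0 and P₂(h₁,h₂) > 0 }) = 0; that is, any such mutual water-filling pair is a time-sharing allocation. -/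
open MeasureTheory

/-!
Where both users transmit, neither positive part is truncated, so clearing denominators in the two
water-filling equations gives `lam₁ * h₁ = σ2 + P₁ h₁ + P₂ h₂ = lam₂ * h₂`. Hence simultaneous
transmission is confined, up to a `μ`-null set, to a line through the origin, which is
Lebesgue-null (`volume_line_eq_zero`) and so `μ`-null by absolute continuity.
-/

theorem volume_line_eq_zero (a b : ℝ) (ha : a ≠ 0) :
    volume {h : ℝ × ℝ | a * h.1 = b * h.2} = 0 := by
  -- The line is the kernel of a nonzero linear functional, hence a proper subspace.
  let f : ℝ × ℝ →ₗ[ℝ] ℝ := a • LinearMap.fst ℝ ℝ ℝ - b • LinearMap.snd ℝ ℝ ℝ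
  have hker : {h : ℝ × ℝ | a * h.1 = b * h.2} = (LinearMap.ker f : Set (ℝ × ℝ)) := by
    ext h
    simp [f, sub_eq_zero]
  rw [hker]
  refine Measure.addHaar_submodule _ _ fun htop => ha ?_
  have hmem : ((1, 0) : ℝ × ℝ) ∈ LinearMap.ker f := htop ▸ Submodule.mem_top
  simpa [f] using hmem

/-- Clears denominators in an untruncated water-filling equation; `q` is the interference. -/
theorem waterfill_level_eq {lam s q g p : ℝ} (hg : 0 < g) (hp : 0 < p)
    (h : p = max (lam - s / g - q / g) 0) : lam * g = s + q + p * g := by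
  rcases max_choice (lam - s / g - q / g) 0 with hm | hm
  · rw [hm] at h
    rw [h]
    field_simp
    ring
  · exact absurd (h.trans hm).symm hp.ne

/-- Any mutual water-filling pair of power allocation policies (a Nash equilibrium
of the two-user water-filling game) is a time-sharing allocation: the two users
transmit simultaneously with probability zero. -/
theorem stmt_6 (μ : Measure (ℝ × ℝ)) [IsProbabilityMeasure μ] (hac : μ ≪ volume)
    (hpos : ∀ᵐ h ∂μ, 0 < h.1 ∧ 0 < h.2)
    (σ2 lam₁ lam₂ : ℝ) (hσ : 0 < σ2) (hlam₁ : 0 < lam₁) (hlam₂ : 0 < lam₂)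
    (P₁ P₂ : ℝ × ℝ → ℝ) (hP₁m : Measurable P₁) (hP₂m : Measurable P₂)
    (hwf₁ : ∀ᵐ h ∂μ, P₁ h = max (lam₁ - σ2 / h.1 - P₂ h * h.2 / h.1) 0)
    (hwf₂ : ∀ᵐ h ∂μ, P₂ h = max (lam₂ - σ2 / h.2 - P₁ h * h.1 / h.2) 0) :
    μ {h : ℝ × ℝ | 0 < P₁ h ∧ 0 < P₂ h} = 0 := by
  have hline : ∀ᵐ h ∂μ, ¬ (lam₁ * h.1 = lam₂ * h.2) :=
    hac (volume_line_eq_zero lam₁ lam₂ hlam₁.ne') |> fun h0 => by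
      simpa [ae_iff] using h0
  refine measure_eq_zero_iff_ae_notMem.2 ?_
  filter_upwards [hline, hpos, hwf₁, hwf₂] with h hne hh h₁ h₂ hP
  have e₁ := waterfill_level_eq hh.1 hP.1 h₁
  have e₂ := waterfill_level_eq hh.2 hP.2 h₂
  exact hne (by linarith)
end

section
/- Let μ be a probability measure on ℝ² (coordinates (h₁,h₂)) with h₁ > 0 and h₂ > 0 μ-almost everywhere, and fix σ² > 0 and λ₁, λ₂ > 0. Define P₁*(h₁,h₂) = (λ₁ − σ²/h₁)⁺ if λ₁h₁ ≥ λ₂h₂ and 0 otherwise, and P₂*(h₁,h₂) = (λ₂ − σ²/h₂)⁺ if λ₂h₂ > λ₁h₁ and 0 otherwise. Assume P₁* and (h₁,h₂) ↦ log(1 + P₁*h₁/(σ² + P₂*h₂)) are μ-integrable, and set P̄₁ = ∫ P₁* dμ. Then for every measurable P : ℝ² → ℝ with P ≥ 0 μ-a.e., ∫ P dμ ≤ P̄₁, and (h₁,h₂) ↦ log(1 + Ph₁/(σ² + P₂*h₂)) μ-integrable, one has ∫ log(1 + P h₁/(σ² + P₂*h₂)) dμ ≤ ∫ log(1 + P₁*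 h₁/(σ² + P₂*h₂)) dμ. (By symmetry the same holds with the roles of the users exchanged, so (P₁*, P₂*) is a Nash equilibrium of the water-filling game.) -/
open MeasureTheory

/-!
In each fading state let `N = σ2 + P₂star * h₂` be the interference-plus-noise seen by user 1.
The time-sharing policy is the water-filling response to `N`: `P₁star = (lam₁ - N / h₁)⁺`
(`waterfill_eq`). Where user 1 is the stronger user, `N = σ2`; where user 2 is stronger,
`N ≥ lam₂ * h₂ > lam₁ * h₁`, so the right-hand side vanishes.

Water-filling maximizes the pointwise Lagrangian `log (1 + p * h₁ / N) - p / lam₁` over `p ≥ 0`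
(`log_le_waterfill`), by the tangent-line bound for the logarithm. Integrating this inequality and
using the average power constraint to discard the term `(∫ P - ∫ P₁star) / lam₁ ≤ 0` gives
the claim.
-/

/-- The water-filling power `q = (lam - N / x)⁺` maximizes `log (1 + p * x / N) - p / lam`
over `p ≥ 0`. -/
lemma log_le_waterfill {x N lam p q : ℝ} (hx : 0 < x) (hN : 0 < N) (hlam : 0 < lam)
    (hp : 0 ≤ p) (hq : q = max (lam - N / x) 0) :
    Real.log (1 + p * x / N) ≤ Real.log (1 + q * x / N) + (p - q) / lam := by
  have hq0 : 0 ≤ q := hq ▸ le_max_right _ _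
  have ha : 0 < 1 + p * x / N := by positivity
  have hb : 0 < 1 + q * x / N := by positivity
  have hD : 0 < N + q * x := by positivity
  have tangent := Real.log_le_sub_one_of_pos (div_pos ha hb)
  rw [Real.log_div ha.ne' hb.ne'] at tangent
  have slope : (1 + p * x / N) / (1 + q * x / N) - 1 = (p - q) * x / (N + q * x) := by
    field_simp
    ring
  have bound : (p - q) * x / (N + q * x) ≤ (p - q) / lam := by
    rw [div_le_div_iff₀ hD hlam]
    rcases le_total (lam - N / x) 0 with h | h
    · rw [max_eq_right h] at hq
      subst hq
      have : lam * x ≤ N := (le_div_iff₀ hx).1 (by linarith)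
      nlinarith
    · rw [max_eq_left h] at hq
      -- On the support of `q` the water level is attained and the bound is an equality.
      have : N + q * x = lam * x := by
        rw [hq]
        field_simp
        ring
      rw [this]
      apply le_of_eq
      ring
  linarith

/-- User 1's time-sharing power is its water-filling power against the noise level created by
user 2's time-sharing power. -/
lemma waterfill_eq {x y σ2 lam₁ lam₂ : ℝ} (hx : 0 < x) (hy : 0 < y) :
    (if lam₂ * y ≤ lam₁ * x then max (lam₁ - σ2 / x) 0 else 0) =
      max (lam₁ -
        (σ2 + (if lam₁ * x < lam₂ * y then max (lam₂ - σ2 / y) 0 else 0) * y) / x) 0 := by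
  by_cases h : lam₂ * y ≤ lam₁ * x
  · simp [h, not_lt.2 h]
  · have h' := not_le.1 h
    rw [if_neg h, if_pos h', eq_comm, max_eq_right]
    have hN : lam₂ * y ≤ σ2 + max (lam₂ - σ2 / y) 0 * y := by
      have h1 := mul_le_mul_of_nonneg_right (le_max_left (lam₂ - σ2 / y) 0) hy.le
      have h2 : (lam₂ - σ2 / y) * y = lam₂ * y - σ2 := by field_simp
      linarith
    rw [sub_nonpos, le_div_iff₀ hx]
    linarith

/-- The time-sharing water-filling policy of user 1 maximizes its average rate
(treating user 2's time-sharing water-filling signal as noise) subject to its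
average power constraint; hence the time-sharing pair is a Nash equilibrium of
the water-filling game. -/
theorem stmt_7 (μ : Measure (ℝ × ℝ)) [IsProbabilityMeasure μ]
    (hpos : ∀ᵐ h ∂μ, 0 < h.1 ∧ 0 < h.2)
    (σ2 lam₁ lam₂ : ℝ) (hσ : 0 < σ2) (hlam₁ : 0 < lam₁) (hlam₂ : 0 < lam₂)
    (P₁star P₂star : ℝ × ℝ → ℝ)
    (hP₁star : P₁star = fun h =>
      if lam₂ * h.2 ≤ lam₁ * h.1 then max (lam₁ - σ2 / h.1) 0 else 0)
    (hP₂star : P₂star = fun h =>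
      if lam₁ * h.1 < lam₂ * h.2 then max (lam₂ - σ2 / h.2) 0 else 0)
    (hP₁Int : Integrable P₁star μ)
    (hR₁Int : Integrable
      (fun h => Real.log (1 + P₁star h * h.1 / (σ2 + P₂star h * h.2))) μ)
    (Pbar₁ : ℝ) (hPbar₁ : Pbar₁ = ∫ h, P₁star h ∂μ) :
    ∀ P : ℝ × ℝ → ℝ, Measurable P → (∀ᵐ h ∂μ, 0 ≤ P h) →
      Integrable P μ → (∫ h, P h ∂μ) ≤ Pbar₁ →
      Integrable (fun h => Real.log (1 + P h * h.1 / (σ2 + P₂star h * h.2))) μ →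
      (∫ h, Real.log (1 + P h * h.1 / (σ2 + P₂star h * h.2)) ∂μ) ≤
        ∫ h, Real.log (1 + P₁star h * h.1 / (σ2 + P₂star h * h.2)) ∂μ := by
  intro P _ hP0 hPInt hPle hRInt
  have key : ∀ᵐ h ∂μ, Real.log (1 + P h * h.1 / (σ2 + P₂star h * h.2)) ≤
      Real.log (1 + P₁star h * h.1 / (σ2 + P₂star h * h.2)) + (P h - P₁star h) / lam₁ := by
    filter_upwards [hpos, hP0] with h hh hp
    obtain ⟨h1, h2⟩ := hh
    have hP2 : 0 ≤ P₂star h := by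
      rw [hP₂star]
      dsimp only
      split_ifs
      · exact le_max_right _ _
      · exact le_rfl
    refine log_le_waterfill h1 (by positivity) hlam₁ hp ?_
    rw [hP₁star, hP₂star]
    exact waterfill_eq h1 h2
  have hdiff : Integrable (fun h => (P h - P₁star h) / lam₁) μ :=
    (hPInt.sub hP₁Int).div_const _
  have hmono := integral_mono_ae hRInt (hR₁Int.add hdiff) key
  simp only [Pi.add_apply] at hmono
  rw [integral_add hR₁Int hdiff, integral_div, integral_sub hPInt hP₁Int] at hmono
  have hpower : ((∫ h, P h ∂μ) - ∫ h, P₁star h ∂μ) / lam₁ ≤ 0 :=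
    div_nonpos_of_nonpos_of_nonneg (by linarith) hlam₁.le
  linarith
end

section
/- Let σ² > 0 and b > 0. Then the function g(t) = (t − σ²/b)⁺ / (σ⁴ + σ²·(b·t − σ²)⁺) is nondecreasing in t ∈ ℝ. -/
/-- The coefficient `g(t) = (t − σ²/b)⁺ / (σ⁴ + σ²(bt − σ²)⁺)` is nondecreasing. -/
theorem stmt_13 (σ2 b : ℝ) (hσ : 0 < σ2) (hb : 0 < b)
    (g : ℝ → ℝ)
    (hg : g = fun t => max (t - σ2 / b) 0 / (σ2 ^ 2 + σ2 * max (b * t - σ2) 0)) :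
    Monotone g := by
  subst hg
  -- With `u = (t - σ2 / b)⁺`, the quotient is `u / (σ2 ^ 2 + σ2 * b * u)`, increasing in `u ≥ 0`.
  have key : ∀ t : ℝ, max (b * t - σ2) 0 = b * max (t - σ2 / b) 0 := by
    intro t
    rw [mul_max_of_nonneg _ _ hb.le, mul_sub, mul_div_cancel₀ _ hb.ne', mul_zero]
  intro s t hst
  simp only [key]
  have huv : max (s - σ2 / b) 0 ≤ max (t - σ2 / b) 0 := by gcongr
  have hu : 0 ≤ max (s - σ2 / b) 0 := le_max_right _ _
  generalize max (s - σ2 / b) 0 = u at *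
  generalize max (t - σ2 / b) 0 = v at *
  have hv : 0 ≤ v := hu.trans huv
  rw [div_le_div_iff₀ (by positivity) (by positivity)]
  -- The cross terms `σ2 * b * u * v` cancel.
  linarith [mul_le_mul_of_nonneg_right huv (sq_nonneg σ2)]
end

section
/- Let n ≥ 1, σ² > 0, and h₁, h₂ ∈ ℝⁿ with h₁ ≠ 0 and h₂ ≠ 0. Define Q(λ₂) = h₁ᵀ(σ²I + (λ₂ − σ²/‖h₂‖²)⁺·h₂h₂ᵀ)⁻¹h₁ and P₁(λ₁, λ₂) = (λ₁ − 1/Q(λ₂))⁺. Then P₁ is nondecreasing in λ₁ and nonincreasing in λ₂. -/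
/-!
By the Sherman–Morrison formula (`inv_rankOne`), with `t = (λ₂ − σ²/‖h₂‖²)⁺`,
`Q(λ₂) = (‖h₁‖² − t (h₁ᵀh₂)² / (σ² + t ‖h₂‖²)) / σ²`.
Since `t ↦ t / (σ² + t ‖h₂‖²)` is nondecreasing on `t ≥ 0`, `Q` is nonincreasing in `t`, hence in
`λ₂`; by Cauchy–Schwarz it stays positive, so `1 / Q` is nondecreasing in `λ₂`. Both monotonicity
claims for `P₁ = (λ₁ − 1/Q(λ₂))⁺` follow.
-/

open Matrix

/-- Sherman–Morrison for a symmetric rank-one perturbation of a positive multiple of the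
identity. -/
lemma inv_rankOne {n : ℕ} (h : Fin n → ℝ) {s t : ℝ} (hs : 0 < s) (ht : 0 ≤ t) :
    (s • (1 : Matrix (Fin n) (Fin n) ℝ) + t • vecMulVec h h)⁻¹ =
      s⁻¹ • ((1 : Matrix (Fin n) (Fin n) ℝ) - (t / (s + t * (h ⬝ᵥ h))) • vecMulVec h h) := by
  have hb : 0 ≤ h ⬝ᵥ h := Finset.sum_nonneg fun i _ => mul_self_nonneg (h i)
  have hd : 0 < s + t * (h ⬝ᵥ h) := by positivity
  apply Matrix.inv_eq_right_inv
  have hv : vecMulVec h h * vecMulVec h h = (h ⬝ᵥ h) • vecMulVec h h := by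
    ext i j
    simp [vecMulVec_mul_vecMulVec, vecMulVec_apply, mul_left_comm]
  simp only [mul_smul_comm, mul_sub, add_mul, smul_mul_assoc, one_mul, mul_one, hv]
  ext i j
  simp only [Matrix.smul_apply, Matrix.sub_apply, Matrix.add_apply, smul_eq_mul]
  field_simp
  ring

lemma quadForm_inv_rankOne {n : ℕ} (g h : Fin n → ℝ) {s t : ℝ} (hs : 0 < s) (ht : 0 ≤ t) :
    g ⬝ᵥ (s • (1 : Matrix (Fin n) (Fin n) ℝ) + t • vecMulVec h h)⁻¹ *ᵥ g =
      s⁻¹ * (g ⬝ᵥ g - t / (s + t * (h ⬝ᵥ h)) * (g ⬝ᵥ h) ^ 2) := by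
  rw [inv_rankOne h hs ht]
  simp only [smul_mulVec, sub_mulVec, one_mulVec, vecMulVec_mulVec, dotProduct_smul,
    dotProduct_sub, smul_eq_mul, op_smul_eq_smul, dotProduct_comm h g]
  ring

/-- User 1's vector-channel water-filling power
`P₁(λ₁,λ₂) = (λ₁ − 1/(h₁ᵀ(σ²I + (λ₂ − σ²/‖h₂‖²)⁺ h₂h₂ᵀ)⁻¹h₁))⁺`
is nondecreasing in its own water level `λ₁` and nonincreasing in the other
user's water level `λ₂`. -/
theorem stmt_14 (n : ℕ) (hn : 1 ≤ n) (σ2 : ℝ) (hσ : 0 < σ2)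
    (h₁ h₂ : Fin n → ℝ) (hh₁ : h₁ ≠ 0) (hh₂ : h₂ ≠ 0)
    (Q : ℝ → ℝ)
    (hQ : Q = fun lam₂ => h₁ ⬝ᵥ
      (σ2 • (1 : Matrix (Fin n) (Fin n) ℝ) +
        max (lam₂ - σ2 / (h₂ ⬝ᵥ h₂)) 0 • vecMulVec h₂ h₂)⁻¹ *ᵥ h₁)
    (P₁ : ℝ → ℝ → ℝ)
    (hP₁ : P₁ = fun lam₁ lam₂ => max (lam₁ - 1 / Q lam₂) 0) :
    (∀ lam₂, Monotone fun lam₁ => P₁ lam₁ lam₂) ∧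
    (∀ lam₁, Antitone fun lam₂ => P₁ lam₁ lam₂) := by
  subst hP₁
  refine ⟨fun lam₂ x y hxy => max_le_max (by linarith) le_rfl, fun lam₁ x y hxy => ?_⟩
  have ha : 0 < h₁ ⬝ᵥ h₁ :=
    lt_of_le_of_ne (Finset.sum_nonneg fun i _ => mul_self_nonneg (h₁ i))
      fun h => hh₁ (dotProduct_self_eq_zero.1 h.symm)
  have hb : 0 ≤ h₂ ⬝ᵥ h₂ := Finset.sum_nonneg fun i _ => mul_self_nonneg (h₂ i)
  have hc : (h₁ ⬝ᵥ h₂) ^ 2 ≤ (h₁ ⬝ᵥ h₁) * (h₂ ⬝ᵥ h₂) := by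
    simpa [dotProduct, sq] using Finset.sum_mul_sq_le_sq_mul_sq Finset.univ h₁ h₂
  have hx : 0 ≤ max (x - σ2 / (h₂ ⬝ᵥ h₂)) 0 := le_max_right _ _
  have hy : 0 ≤ max (y - σ2 / (h₂ ⬝ᵥ h₂)) 0 := le_max_right _ _
  have ht : max (x - σ2 / (h₂ ⬝ᵥ h₂)) 0 ≤ max (y - σ2 / (h₂ ⬝ᵥ h₂)) 0 :=
    max_le_max (by linarith) le_rfl
  have hQx := quadForm_inv_rankOne h₁ h₂ hσ hx
  have hQy := quadForm_inv_rankOne h₁ h₂ hσ hy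
  replace hQx := (congrFun hQ x).trans hQx
  replace hQy := (congrFun hQ y).trans hQy
  generalize max (x - σ2 / (h₂ ⬝ᵥ h₂)) 0 = t at *
  generalize max (y - σ2 / (h₂ ⬝ᵥ h₂)) 0 = u at *
  have hdt : 0 < σ2 + t * (h₂ ⬝ᵥ h₂) := by positivity
  have hdu : 0 < σ2 + u * (h₂ ⬝ᵥ h₂) := by positivity
  have hpos : 0 < Q y := by
    rw [hQy]
    refine mul_pos (inv_pos.2 hσ) (sub_pos.2 ?_)
    rw [div_mul_eq_mul_div, div_lt_iff₀ hdu]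
    nlinarith [mul_le_mul_of_nonneg_left hc hy, mul_pos ha hσ]
  have hanti : Q y ≤ Q x := by
    rw [hQx, hQy]
    have : t / (σ2 + t * (h₂ ⬝ᵥ h₂)) ≤ u / (σ2 + u * (h₂ ⬝ᵥ h₂)) := by
      rw [div_le_div_iff₀ hdt hdu]
      nlinarith [mul_le_mul_of_nonneg_right ht hσ.le]
    gcongr
  exact max_le_max (sub_le_sub_left (one_div_le_one_div_of_le hpos hanti) _) le_rfl
end

section
/- Let n ≥ 1, let A be a positive definite real symmetric n×n matrix, and let B and C be positive semidefinite real symmetric n×n matrices. Then det(A + B + C) · det(A) ≤ det(A + B) · det(A + C). -/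
open Matrix

/-!
Write `C = Rᴴ * R`. The matrix determinant lemma gives
`det (X + C) = det X * det (1 + R * X⁻¹ * Rᴴ)` for invertible `X`. Applied to `X = A` and
`X = A + B`, it reduces the claim to
`det (1 + R * (A + B)⁻¹ * Rᴴ) ≤ det (1 + R * A⁻¹ * Rᴴ)`. This follows from two monotonicity
facts for the Loewner order: the inverse is antitone (`posSemidef_inv_sub_inv_add`, from the
Woodbury identity) and the determinant is monotone (`det_le_det_add`, from the determinant lemma
and `1 ≤ det (1 + M)` for positive semidefinite `M`).
-/

open scoped MatrixOrder in
lemma exists_gram {n : ℕ} {M : Matrix (Fin n) (Fin n) ℝ} (hM : M.PosSemidef) :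
    ∃ R : Matrix (Fin n) (Fin n) ℝ, M = Rᴴ * R :=
  CStarAlgebra.nonneg_iff_eq_star_mul_self.mp hM.nonneg

/-- The eigenvalues of `1 + M` are all at least `1`. -/
lemma one_le_det_one_add {n : ℕ} {M : Matrix (Fin n) (Fin n) ℝ} (hM : M.PosSemidef) :
    1 ≤ (1 + M).det := by
  have key : (1 + M).det = ∏ i, (1 + hM.isHermitian.eigenvalues i) := by
    have h := hM.isHermitian.spectral_theorem
    -- Diagonalizing `M` also diagonalizes `1 + M`.
    have h2 : 1 + M = Unitary.conjStarAlgAut ℝ _ hM.isHermitian.eigenvectorUnitary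
        (diagonal fun i => 1 + hM.isHermitian.eigenvalues i) := by
      conv_lhs => rw [h]
      rw [← map_one (Unitary.conjStarAlgAut ℝ _ hM.isHermitian.eigenvectorUnitary), ← map_add,
        ← diagonal_one, diagonal_add]
      rfl
    rw [h2, Unitary.conjStarAlgAut_apply, det_mul_right_comm, ← Unitary.coe_star,
      Unitary.coe_mul_star_self, one_mul,
      det_diagonal]
  rw [key]
  exact Finset.one_le_prod fun i _ => by linarith [hM.eigenvalues_nonneg i]

/-- Matrix determinant lemma for a positive definite matrix and a Gram matrix. -/
lemma det_add_gram {n : ℕ} {P : Matrix (Fin n) (Fin n) ℝ} (hP : P.PosDef)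
    (R : Matrix (Fin n) (Fin n) ℝ) :
    (P + Rᴴ * R).det = P.det * (1 + R * P⁻¹ * Rᴴ).det :=
  det_add_mul _ _ hP.det_pos.ne'.isUnit

/-- The determinant is monotone in the Loewner order on positive definite matrices. -/
lemma det_le_det_add {n : ℕ} {P Q : Matrix (Fin n) (Fin n) ℝ} (hP : P.PosDef)
    (hQ : Q.PosSemidef) : P.det ≤ (P + Q).det := by
  obtain ⟨R, rfl⟩ := exists_gram hQ
  rw [det_add_gram hP]
  exact le_mul_of_one_le_right hP.det_pos.le
    (one_le_det_one_add (hP.inv.posSemidef.mul_mul_conjTranspose_same R))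

/-- The inverse is antitone in the Loewner order on positive definite matrices. -/
lemma posSemidef_inv_sub_inv_add {n : ℕ} {A B : Matrix (Fin n) (Fin n) ℝ} (hA : A.PosDef)
    (hB : B.PosSemidef) : (A⁻¹ - (A + B)⁻¹).PosSemidef := by
  obtain ⟨S, rfl⟩ := exists_gram hB
  have hK : (1 + S * A⁻¹ * Sᴴ).PosDef :=
    PosDef.one.add_posSemidef (hA.inv.posSemidef.mul_mul_conjTranspose_same S)
  -- Woodbury: the difference is `(S * A⁻¹)ᴴ * (1 + S * A⁻¹ * Sᴴ)⁻¹ * (S * A⁻¹)`.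
  have hW := add_mul_mul_inv_eq_sub A Sᴴ 1 S hA.isUnit isUnit_one (by simpa using hK.isUnit)
  simp only [Matrix.mul_one, inv_one] at hW
  rw [hW, sub_sub_cancel]
  have h := hK.inv.posSemidef.conjTranspose_mul_mul_same (S * A⁻¹)
  rw [conjTranspose_mul, hA.isHermitian.inv.eq] at h
  simpa only [Matrix.mul_assoc] using h

/-- Log-determinant submodularity: for `A` positive definite and `B`, `C` positive
semidefinite, `det(A + B + C) · det A ≤ det(A + B) · det(A + C)`. -/
theorem stmt_15 (n : ℕ) (hn : 1 ≤ n) (A B C : Matrix (Fin n) (Fin n) ℝ)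
    (hA : A.PosDef) (hB : B.PosSemidef) (hC : C.PosSemidef) :
    (A + B + C).det * A.det ≤ (A + B).det * (A + C).det := by
  have hAB : (A + B).PosDef := hA.add_posSemidef hB
  obtain ⟨R, rfl⟩ := exists_gram hC
  have hmono : (1 + R * (A + B)⁻¹ * Rᴴ).det ≤ (1 + R * A⁻¹ * Rᴴ).det := by
    have h := det_le_det_add
      (PosDef.one.add_posSemidef (hAB.inv.posSemidef.mul_mul_conjTranspose_same R))
      ((posSemidef_inv_sub_inv_add hA hB).mul_mul_conjTranspose_same R)
    rwa [Matrix.mul_sub, Matrix.sub_mul, add_assoc, add_sub_cancel] at h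
  rw [det_add_gram hAB, det_add_gram hA, mul_assoc, mul_comm _ A.det]
  exact mul_le_mul_of_nonneg_left (mul_le_mul_of_nonneg_left hmono hA.det_pos.le)
    hAB.det_pos.le
end

section
/- Let n ≥ 1, let A be a positive definite real symmetric n×n matrix, let h ∈ ℝⁿ with h ≠ 0, and let λ > 0. Set q = hᵀA⁻¹h and p* = (λ − 1/q)⁺. Then for every p ≥ 0, log det(A + p·hhᵀ) − p/λ ≤ log det(A + p*·hhᵀ) − p*/λ. -/
/-!
By the matrix determinant lemma, `det (A + p • h hᵀ) = det A * (1 + p q)` with `q = hᵀA⁻¹h > 0`,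
so the objective is, up to the constant `log det A`, the concave scalar function
`log (1 + p q) - p / lam`. The tangent-line bound `log x ≤ x - 1` at `p*` gives
`log (1 + p q) - log (1 + p* q) ≤ (p - p*) q / (1 + p* q)`, and the choice of `p*` makes the right
side at most `(p - p*) / lam`: with equality when `p* = lam - 1 / q`, since then
`1 + p* q = lam q`, and because `q ≤ 1 / lam` and `p ≥ 0` when `p* = 0`.
-/

open Matrix

/-- The matrix determinant lemma for the rank-one update `p • h hᵀ`. -/
lemma det_add_smul_vecMulVec {n : ℕ} {A : Matrix (Fin n) (Fin n) ℝ} (hA : IsUnit A.det)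
    (h : Fin n → ℝ) (p : ℝ) :
    (A + p • vecMulVec h h).det = A.det * (1 + p * (h ⬝ᵥ A⁻¹ *ᵥ h)) := by
  have key := det_add_replicateCol_mul_replicateRow (ι := Unit) hA (p • h) h
  rw [← vecMulVec_eq, smul_vecMulVec] at key
  rw [key, det_unique (n := Unit), Matrix.add_apply, one_apply_eq, Matrix.mul_assoc, ← replicateCol_mulVec,
    replicateRow_mul_replicateCol_apply, mulVec_smul, dotProduct_smul, smul_eq_mul]

/-- Pointwise Lagrangian maximization in the vector-channel water-filling problem:
with `q = hᵀA⁻¹h`, the power `p* = (λ − 1/q)⁺` maximizes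
`p ↦ log det(A + p h hᵀ) − p/λ` over `p ≥ 0`. -/
theorem stmt_16 (n : ℕ) (hn : 1 ≤ n) (A : Matrix (Fin n) (Fin n) ℝ)
    (hA : A.PosDef) (h : Fin n → ℝ) (hh : h ≠ 0) (lam : ℝ) (hlam : 0 < lam)
    (q : ℝ) (hq : q = h ⬝ᵥ A⁻¹ *ᵥ h)
    (pstar : ℝ) (hpstar : pstar = max (lam - 1 / q) 0) :
    ∀ p : ℝ, 0 ≤ p →
      Real.log (A + p • vecMulVec h h).det - p / lam ≤
        Real.log (A + pstar • vecMulVec h h).det - pstar / lam := by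
  intro p hp
  have hdet : 0 < A.det := hA.det_pos
  have hqpos : 0 < q := by
    rw [hq]
    simpa using hA.inv.dotProduct_mulVec_pos hh
  have hps : 0 ≤ pstar := hpstar ▸ le_max_right _ _
  have h1 : 0 < 1 + p * q := by positivity
  have h2 : 0 < 1 + pstar * q := by positivity
  rw [det_add_smul_vecMulVec hdet.ne'.isUnit, det_add_smul_vecMulVec hdet.ne'.isUnit, ← hq,
    Real.log_mul hdet.ne' h1.ne', Real.log_mul hdet.ne' h2.ne']
  have hlog := Real.log_le_sub_one_of_pos (div_pos h1 h2)
  rw [Real.log_div h1.ne' h2.ne'] at hlog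
  have hslope : (1 + p * q) / (1 + pstar * q) - 1 ≤ p / lam - pstar / lam := by
    rcases le_total (lam - 1 / q) 0 with hc | hc
    · rw [max_eq_right hc] at hpstar
      have hle : q ≤ 1 / lam := (le_one_div hqpos hlam).2 (by linarith)
      have := mul_le_mul_of_nonneg_left hle hp
      simp only [hpstar, zero_mul, add_zero, div_one, zero_div, sub_zero]
      rw [mul_one_div] at this
      linarith
    · rw [max_eq_left hc] at hpstar
      have hwater : 1 + pstar * q = lam * q := by
        rw [hpstar]
        field_simp
        ring
      rw [hwater, hpstar]
      apply le_of_eq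
      field_simp
      ring
  linarith
end
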